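/- arXiv:1607.02409 — 2 statements merged into one kernel-verified Lean document; each statement's English description precedes it below -/
import Mathlib

section
/- Let J(x) = x·tanh x and Ω(ξ,η,ζ) = J(ξ)² + J(η)² + J(ζ)² − 2J(ξ)J(η) − 2J(η)J(ζ) − 2J(ζ)J(ξ). Then for all real ξ, η, ζ with ξ + η + ζ = 0, one has Ω(ξ,η,ζ) = 0 if and only if ξ·η·ζ = 0; in particular Ω is strictly negative on the plane {ξ + η + ζ = 0} away from the three lines ξ = 0, η = 0, ζ = 0. -/
noncomputable def J (x : ℝ) : ℝ := x * Real.tanh x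

noncomputable def Ω (ξ η ζ : ℝ) : ℝ :=
  J ξ ^ 2 + J η ^ 2 + J ζ ^ 2 - 2 * J ξ * J η - 2 * J η * J ζ - 2 * J ζ * J ξ

theorem sinh_lt_mul_cosh_aux (b : ℝ) (hb : 0 < b) : Real.sinh b < b * Real.cosh b := by
  have hm : StrictMonoOn (fun x : ℝ => x * Real.cosh x - Real.sinh x) (Set.Ici 0) := by
    apply strictMonoOn_of_deriv_pos (convex_Ici 0)
    · fun_prop
    · intro x hx
      rw [interior_Ici] at hx
      have hd : HasDerivAt (fun x : ℝ => x * Real.cosh x - Real.sinh x)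
          (1 * Real.cosh x + x * Real.sinh x - Real.cosh x) x :=
        ((hasDerivAt_id x).mul (Real.hasDerivAt_cosh x)).sub (Real.hasDerivAt_sinh x)
      rw [hd.deriv]
      have := mul_pos hx (Real.sinh_pos_iff.2 hx)
      linarith
  have := hm (Set.mem_Ici.2 le_rfl) (Set.mem_Ici.2 hb.le) hb
  simp at this
  linarith

theorem tanh_slope_aux (a b : ℝ) (ha : 0 < a) (hb : 0 < b) :
    Real.tanh (a + b) / (a + b) < Real.tanh a / a ∧ Real.tanh a < Real.tanh (a + b) := by
  have h1 := sinh_lt_mul_cosh_aux b hb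
  have h2 : a < Real.sinh a := Real.self_lt_sinh_iff.2 ha
  have h3 : Real.cosh b < Real.cosh (a + b) := by
    rw [Real.cosh_lt_cosh, abs_of_pos hb, abs_of_pos (by linarith)]; linarith
  have hsb : 0 < Real.sinh b := Real.sinh_pos_iff.2 hb
  have key : Real.sinh (a + b) * Real.cosh a - Real.sinh a * Real.cosh (a + b)
      = Real.sinh b := by
    have h := Real.sinh_sub (a + b) a
    rw [add_sub_cancel_left] at h
    linarith
  have hca := Real.cosh_pos a
  have hcb := Real.cosh_pos (a + b)
  have h4 : a * Real.sinh b < Real.sinh a * (b * Real.cosh (a + b)) := by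
    have : Real.sinh b < b * Real.cosh (a + b) := h1.trans (mul_lt_mul_of_pos_left h3 hb)
    exact mul_lt_mul'' h2 this ha.le hsb.le
  rw [Real.tanh_eq_sinh_div_cosh, Real.tanh_eq_sinh_div_cosh]
  constructor
  · rw [div_div, div_div, div_lt_div_iff₀ (by positivity) (by positivity)]
    linear_combination h4 + a * key
  · rw [div_lt_div_iff₀ hca hcb]
    linarith

theorem omega_neg_aux (a b : ℝ) (ha : 0 < a) (hb : 0 < b) : Ω a b (a + b) < 0 := by
  obtain ⟨h1, h2⟩ := tanh_slope_aux a b ha hb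
  obtain ⟨h3, h4⟩ := tanh_slope_aux b a hb ha
  rw [add_comm b a] at h3 h4
  have hT : 0 < Real.tanh (a + b) := by
    rw [Real.tanh_eq_sinh_div_cosh]
    exact div_pos (Real.sinh_pos_iff.2 (by linarith)) (Real.cosh_pos _)
  have hc : 0 < a + b := by linarith
  have hr : 0 < Real.tanh (a + b) / (a + b) := div_pos hT hc
  have eA : J a = a ^ 2 * (Real.tanh a / a) := by unfold J; field_simp
  have eB : J b = b ^ 2 * (Real.tanh b / b) := by unfold J; field_simp
  have eC : J (a + b) = (a + b) ^ 2 * (Real.tanh (a + b) / (a + b)) := by unfold J; field_simp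
  have hD : 0 < J (a + b) - J a - J b := by
    unfold J
    nlinarith [mul_lt_mul_of_pos_left h2 ha, mul_lt_mul_of_pos_left h4 hb]
  set r := Real.tanh (a + b) / (a + b)
  set p := Real.tanh a / a
  set q := Real.tanh b / b
  have hlt : J (a + b) - J a - J b < 2 * (a * b) * r := by
    rw [eA, eB, eC]
    nlinarith [mul_lt_mul_of_pos_left h1 (pow_pos ha 2), mul_lt_mul_of_pos_left h3 (pow_pos hb 2)]
  have hsq : (J (a + b) - J a - J b) ^ 2 < (2 * (a * b) * r) ^ 2 :=
    pow_lt_pow_left₀ hlt hD.le two_ne_zero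
  have hpq : r * r < p * q := mul_lt_mul'' h1 h3 hr.le hr.le
  have h5 : (2 * (a * b) * r) ^ 2 < 4 * (J a * J b) := by
    rw [eA, eB]
    have := mul_lt_mul_of_pos_left hpq (show 0 < 4 * (a * b) ^ 2 by positivity)
    linarith
  unfold Ω
  linarith

theorem J_neg_aux (x : ℝ) : J (-x) = J x := by
  unfold J; rw [Real.tanh_neg]; ring

theorem omega_neg_aux2 (a b c : ℝ) (h : a + b + c = 0) (hab : 0 < a * b) : Ω a b c < 0 := by
  have hc : c = -(a + b) := by linarith
  subst hc
  rcases pos_and_pos_or_neg_and_neg_of_mul_pos hab with ⟨ha, hb⟩ | ⟨ha, hb⟩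
  · have := omega_neg_aux a b ha hb
    unfold Ω at *
    rwa [J_neg_aux]
  · have := omega_neg_aux (-a) (-b) (by linarith) (by linarith)
    rw [← neg_add] at this
    unfold Ω at *
    rwa [J_neg_aux a, J_neg_aux b] at this

/-- On the resonant plane, the symmetrized resonance function vanishes exactly
on the three lines `ξ = 0`, `η = 0`, `ζ = 0`, and is strictly negative away
from them. -/
theorem resonance_zero_iff (ξ η ζ : ℝ) (h : ξ + η + ζ = 0) :
    (Ω ξ η ζ = 0 ↔ ξ * η * ζ = 0) ∧ (ξ * η * ζ ≠ 0 → Ω ξ η ζ < 0) := by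
  have hneg : ξ * η * ζ ≠ 0 → Ω ξ η ζ < 0 := by
    intro hne
    have h0 : ξ ≠ 0 ∧ η ≠ 0 ∧ ζ ≠ 0 := by
      refine ⟨?_, ?_, ?_⟩ <;> rintro rfl <;> simp at hne
    obtain ⟨hx, hy, hz⟩ := h0
    by_cases h1 : 0 < ξ * η
    · exact omega_neg_aux2 _ _ _ h h1
    by_cases h2 : 0 < η * ζ
    · have := omega_neg_aux2 η ζ ξ (by linarith) h2
      unfold Ω at *
      linarith
    by_cases h3 : 0 < ζ * ξ
    · have := omega_neg_aux2 ζ ξ η (by linarith) h3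
      unfold Ω at *
      linarith
    exfalso
    have hp : 0 < (ξ * η * ζ) ^ 2 := by positivity
    have e1 : 0 < -(ξ * η) := by
      have := mul_ne_zero hx hy
      rcases lt_or_gt_of_ne this with h | h <;> linarith
    have e2 : 0 < -(η * ζ) := by
      have := mul_ne_zero hy hz
      rcases lt_or_gt_of_ne this with h | h <;> linarith
    have e3 : 0 < -(ζ * ξ) := by
      have := mul_ne_zero hz hx
      rcases lt_or_gt_of_ne this with h | h <;> linarith
    have := mul_pos (mul_pos e1 e2) e3
    nlinarith
  refine ⟨⟨fun h0 => ?_, fun h0 => ?_⟩, hneg⟩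
  · by_contra hne
    exact (hneg hne).ne h0
  · have J0 : J 0 = 0 := by simp [J]
    rcases mul_eq_zero.1 h0 with h1 | rfl
    · rcases mul_eq_zero.1 h1 with rfl | rfl
      · have : ζ = -η := by linarith
        subst this
        unfold Ω; rw [J_neg_aux, J0]; ring
      · have : ζ = -ξ := by linarith
        subst this
        unfold Ω; rw [J_neg_aux, J0]; ring
    · have : η = -ξ := by linarith
      subst this
      unfold Ω; rw [J_neg_aux, J0]; ring
end

section
/- Let f : ℝ → ℂ be a Schwartz function with Fourier transform f̂(ξ) = (2π)^{−1/2}·∫_ℝ f(α)e^{−iαξ} dα. On ℝ × [−1,0] define u(α,β) = (2π)^{−1/2}·∫_ℝ (cosh((β+1)ξ)/cosh ξ)·f̂(ξ)·e^{iαξ} dξ and v(α,β) = (2π)^{−1/2}·∫_ℝ i·(sinh((β+1)ξ)/cosh ξ)·f̂(ξ)·e^{iαξ} dξ. Then u and v satisfy the Cauchy–Riemann equations ∂u/∂α = ∂v/∂β and ∂u/∂β = −∂v/∂α on ℝ × (−1,0), and on the top boundary v(α,0) = −(𝒯f)(α), where 𝒯f is the Schwartz function whose Fourier transform is ξ ↦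 −i·tanh(ξ)·f̂(ξ). -/
open MeasureTheory

/-- The Fourier transform `f̂(ξ) = (2π)^{−1/2} ∫ f(α) e^{−iαξ} dα`. -/
noncomputable def FT (f : ℝ → ℂ) (ξ : ℝ) : ℂ :=
  ((2 * Real.pi) ^ (-(1 : ℝ) / 2) : ℝ) •
    ∫ α : ℝ, f α * Complex.exp (-(Complex.I * α * ξ))


theorem FT_eq (f : SchwartzMap ℝ ℂ) (ξ : ℝ) :
    FT (⇑f) ξ = ((2 * Real.pi) ^ (-(1 : ℝ) / 2) : ℝ) •
      (FourierTransform.fourier f : SchwartzMap ℝ ℂ) (ξ / (2 * Real.pi)) := by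
  unfold FT
  rw [SchwartzMap.fourier_coe, Real.fourier_real_eq_integral_exp_smul]
  congr 2
  funext a
  rw [smul_eq_mul, mul_comm]
  congr 2
  have : (Real.pi : ℂ) ≠ 0 := by exact_mod_cast Real.pi_ne_zero
  push_cast
  field_simp

theorem FT_cont (f : SchwartzMap ℝ ℂ) : Continuous (FT (⇑f)) := by
  have : FT (⇑f) = fun ξ => _ := funext (FT_eq f)
  rw [this]
  have := (FourierTransform.fourier f : SchwartzMap ℝ ℂ).continuous
  fun_prop

theorem FT_int (f : SchwartzMap ℝ ℂ) : Integrable (FT (⇑f)) := by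
  have : FT (⇑f) = fun ξ => _ := funext (FT_eq f)
  rw [this]
  exact (((FourierTransform.fourier f : SchwartzMap ℝ ℂ).integrable).comp_div
    (by positivity : (2 * Real.pi) ≠ 0)).smul
    ((2 * Real.pi) ^ (-(1 : ℝ) / 2) : ℝ)

theorem FT_int' (f : SchwartzMap ℝ ℂ) : Integrable (fun ξ : ℝ => |ξ| * ‖FT (⇑f) ξ‖) := by
  have h := ((FourierTransform.fourier f : SchwartzMap ℝ ℂ).integrable_pow_mul volume 1).comp_div
    (by positivity : (2 * Real.pi) ≠ 0)
  refine (h.const_mul (((2 * Real.pi) ^ (-(1 : ℝ) / 2) : ℝ) * (2 * Real.pi))).congr ?_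
  refine Filter.Eventually.of_forall fun ξ => ?_
  have h1 : 0 < (2 * Real.pi) ^ (-(1 : ℝ) / 2) := by positivity
  have h2 : 0 < 2 * Real.pi := by positivity
  simp only [FT_eq, norm_smul, Real.norm_eq_abs, abs_of_pos h1, pow_one, abs_div, abs_of_pos h2]
  field_simp

theorem param_deriv (f : SchwartzMap ℝ ℂ) (k k' : ℝ → ℝ → ℂ) (x₀ : ℝ) (s : Set ℝ)
    (hs : s ∈ nhds x₀) (hk : ∀ x, Continuous (k x)) (hk' : Continuous (k' x₀))
    (hd : ∀ x ξ, HasDerivAt (fun y => k y ξ) (k' x ξ) x)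
    (hb : ∀ ξ, ‖k x₀ ξ‖ ≤ 1) (hb' : ∀ x ∈ s, ∀ ξ, ‖k' x ξ‖ ≤ |ξ|) :
    HasDerivAt (fun x => ((2 * Real.pi) ^ (-(1 : ℝ) / 2) : ℝ) • ∫ ξ : ℝ, k x ξ * FT (⇑f) ξ)
      (((2 * Real.pi) ^ (-(1 : ℝ) / 2) : ℝ) • ∫ ξ : ℝ, k' x₀ ξ * FT (⇑f) ξ) x₀ := by
  have hF := FT_cont f
  refine HasDerivAt.const_smul ((2 * Real.pi) ^ (-(1 : ℝ) / 2) : ℝ) ?_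
  refine (hasDerivAt_integral_of_dominated_loc_of_deriv_le (F' := fun x ξ => k' x ξ * FT (⇑f) ξ)
    (bound := fun ξ => |ξ| * ‖FT (⇑f) ξ‖) hs ?_ ?_ ?_ ?_ (FT_int' f) ?_).2
  · exact Filter.Eventually.of_forall fun x => ((hk x).mul hF).aestronglyMeasurable
  · exact (FT_int f).bdd_mul (hk x₀).aestronglyMeasurable (Filter.Eventually.of_forall hb)
  · exact (hk'.mul hF).aestronglyMeasurable
  · refine Filter.Eventually.of_forall fun ξ x hx => ?_
    rw [norm_mul]
    exact mul_le_mul_of_nonneg_right (hb' x hx ξ) (norm_nonneg _)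
  · exact Filter.Eventually.of_forall fun ξ x _ => (hd x ξ).mul_const _

theorem cosh_bd (b ξ : ℝ) (hb : b ∈ Set.Ioo (-1 : ℝ) 0) :
    |Real.cosh ((b + 1) * ξ) / Real.cosh ξ| ≤ 1 := by
  rw [abs_div, abs_of_pos (Real.cosh_pos _), abs_of_pos (Real.cosh_pos _), div_le_one (Real.cosh_pos _), Real.cosh_le_cosh,
    abs_mul, abs_of_pos (by linarith [hb.1])]
  nlinarith [hb.2, abs_nonneg ξ]

theorem sinh_bd (b ξ : ℝ) (hb : b ∈ Set.Ioo (-1 : ℝ) 0) :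
    |Real.sinh ((b + 1) * ξ) / Real.cosh ξ| ≤ 1 := by
  refine le_trans ?_ (cosh_bd b ξ hb)
  rw [abs_div, abs_div]
  refine div_le_div_of_nonneg_right ?_ (abs_nonneg _)
  exact sq_le_sq.1 (by rw [Real.cosh_sq]; linarith)

theorem exp_norm (a ξ : ℝ) : ‖Complex.exp (Complex.I * a * ξ)‖ = 1 := by
  rw [Complex.norm_exp]; simp

theorem exp_deriv (a ξ : ℝ) : HasDerivAt (fun x : ℝ => Complex.exp (Complex.I * x * ξ))
    (Complex.exp (Complex.I * a * ξ) * (Complex.I * ξ)) a := by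
  have h : HasDerivAt (fun x : ℝ => Complex.I * x * ξ) (Complex.I * ξ) a := by
    simpa using ((Complex.ofRealCLM.hasDerivAt (x := a)).const_mul Complex.I).mul_const (ξ : ℂ)
  exact h.cexp

theorem cosh_deriv (b ξ : ℝ) :
    HasDerivAt (fun y : ℝ => ((Real.cosh ((y + 1) * ξ) / Real.cosh ξ : ℝ) : ℂ))
      ((ξ * (Real.sinh ((b + 1) * ξ) / Real.cosh ξ) : ℝ) : ℂ) b := by
  have h : HasDerivAt (fun y : ℝ => (y + 1) * ξ) ξ b := by
    simpa using ((hasDerivAt_id b).add_const 1).mul_const ξ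
  have := (h.cosh.div_const (Real.cosh ξ)).ofReal_comp
  convert this using 2
  ring

theorem sinh_deriv (b ξ : ℝ) :
    HasDerivAt (fun y : ℝ => ((Real.sinh ((y + 1) * ξ) / Real.cosh ξ : ℝ) : ℂ))
      ((ξ * (Real.cosh ((b + 1) * ξ) / Real.cosh ξ) : ℝ) : ℂ) b := by
  have h : HasDerivAt (fun y : ℝ => (y + 1) * ξ) ξ b := by
    simpa using ((hasDerivAt_id b).add_const 1).mul_const ξ
  have := (h.sinh.div_const (Real.cosh ξ)).ofReal_comp
  convert this using 2
  ring

theorem cosh_cont (b : ℝ) :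
    Continuous (fun ξ : ℝ => ((Real.cosh ((b + 1) * ξ) / Real.cosh ξ : ℝ) : ℂ)) := by
  refine Complex.continuous_ofReal.comp (Continuous.div ?_ Real.continuous_cosh
    fun ξ => (Real.cosh_pos ξ).ne')
  exact Real.continuous_cosh.comp (by fun_prop)

theorem sinh_cont (b : ℝ) :
    Continuous (fun ξ : ℝ => ((Real.sinh ((b + 1) * ξ) / Real.cosh ξ : ℝ) : ℂ)) := by
  refine Complex.continuous_ofReal.comp (Continuous.div ?_ Real.continuous_cosh
    fun ξ => (Real.cosh_pos ξ).ne')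
  exact Real.continuous_sinh.comp (by fun_prop)

theorem FT_inv (g : SchwartzMap ℝ ℂ) (a : ℝ) :
    ((2 * Real.pi) ^ (-(1 : ℝ) / 2) : ℝ) •
      ∫ ξ : ℝ, FT (⇑g) ξ * Complex.exp (Complex.I * a * ξ) = g a := by
  have hp : 0 < 2 * Real.pi := by positivity
  have h1 : ∀ ξ : ℝ, FT (⇑g) ξ * Complex.exp (Complex.I * a * ξ) =
      ((2 * Real.pi) ^ (-(1 : ℝ) / 2) : ℝ) • (fun η : ℝ => Complex.exp (↑(2 * Real.pi * η * a) *
        Complex.I) • (FourierTransform.fourier g : SchwartzMap ℝ ℂ) η) (ξ / (2 * Real.pi)) := by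
    intro ξ
    rw [FT_eq, smul_mul_assoc]
    congr 1
    simp only [smul_eq_mul]
    rw [mul_comm]
    congr 2
    have : (Real.pi : ℂ) ≠ 0 := by exact_mod_cast Real.pi_ne_zero
    push_cast
    field_simp
  have h2 := congrArg (fun h : SchwartzMap ℝ ℂ => h a)
    (FourierTransform.fourierInv_fourier_eq (F := SchwartzMap ℝ ℂ) g)
  simp only [SchwartzMap.fourierInv_coe, Real.fourierInv_eq'] at h2
  set G : ℝ → ℂ := fun η : ℝ => Complex.exp (↑(2 * Real.pi * η * a) *
        Complex.I) • (FourierTransform.fourier g : SchwartzMap ℝ ℂ) η with hG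
  have h3 : ∫ η, G η = g a := by
    rw [← h2]
    congr 1
    funext η
    simp only [hG]
    congr 3
    simp
    ring
  rw [integral_congr_ae (Filter.Eventually.of_forall h1), integral_smul,
    Measure.integral_comp_div, abs_of_pos hp, smul_smul, smul_smul, h3,
    ← Real.rpow_add hp]
  have h4 : (2 * Real.pi) ^ (-(1 : ℝ) / 2 + -(1 : ℝ) / 2) = (2 * Real.pi)⁻¹ := by
    rw [← Real.rpow_neg_one]; norm_num
  rw [h4, inv_mul_cancel₀ hp.ne', one_smul]

/-- The harmonic conjugate on the strip: `u` and `v` satisfy the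
Cauchy–Riemann equations, and on the top boundary `v(α,0) = −(𝒯f)(α)`, where
`𝒯` is the Tilbert transform, i.e. the Fourier multiplier `−i tanh ξ`. -/
theorem strip_harmonic_conjugate (f g : SchwartzMap ℝ ℂ) (u v : ℝ → ℝ → ℂ)
    (hu : ∀ α β : ℝ, u α β =
      ((2 * Real.pi) ^ (-(1 : ℝ) / 2) : ℝ) •
        ∫ ξ : ℝ, ((Real.cosh ((β + 1) * ξ) / Real.cosh ξ : ℝ) : ℂ) * FT (⇑f) ξ *
          Complex.exp (Complex.I * α * ξ))
    (hv : ∀ α β : ℝ, v α β =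
      ((2 * Real.pi) ^ (-(1 : ℝ) / 2) : ℝ) •
        ∫ ξ : ℝ, Complex.I * ((Real.sinh ((β + 1) * ξ) / Real.cosh ξ : ℝ) : ℂ) * FT (⇑f) ξ *
          Complex.exp (Complex.I * α * ξ))
    (hg : ∀ ξ : ℝ, FT (⇑g) ξ = -Complex.I * (Real.tanh ξ : ℂ) * FT (⇑f) ξ) :
    (∀ α β : ℝ, β ∈ Set.Ioo (-1 : ℝ) 0 →
        deriv (fun x => u x β) α = deriv (fun y => v α y) β ∧
          deriv (fun y => u α y) β = -deriv (fun x => v x β) α) ∧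
      (∀ α : ℝ, v α 0 = -g α) := by
  constructor
  · intro α β hβ
    have hs : Set.Ioo (-1 : ℝ) 0 ∈ nhds β := Ioo_mem_nhds hβ.1 hβ.2
    have A1 := param_deriv f
      (fun x ξ => ((Real.cosh ((β + 1) * ξ) / Real.cosh ξ : ℝ) : ℂ) * Complex.exp (Complex.I * x * ξ))
      (fun x ξ => ((Real.cosh ((β + 1) * ξ) / Real.cosh ξ : ℝ) : ℂ) *
        (Complex.exp (Complex.I * x * ξ) * (Complex.I * ξ))) α Set.univ Filter.univ_mem
      (fun x => (cosh_cont β).mul (by fun_prop)) ((cosh_cont β).mul (by fun_prop))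
      (fun x ξ => (exp_deriv x ξ).const_mul _)
      (fun ξ => by
        rw [norm_mul, exp_norm, Complex.norm_real, mul_one]; exact cosh_bd β ξ hβ)
      (fun x _ ξ => by
        rw [norm_mul, norm_mul, norm_mul, exp_norm, Complex.norm_real, Complex.norm_real,
          Complex.norm_I, one_mul, one_mul]
        exact mul_le_of_le_one_left (abs_nonneg _) (cosh_bd β ξ hβ))
    have A2 := param_deriv f
      (fun x ξ => Complex.I * ((Real.sinh ((β + 1) * ξ) / Real.cosh ξ : ℝ) : ℂ) *
        Complex.exp (Complex.I * x * ξ))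
      (fun x ξ => Complex.I * ((Real.sinh ((β + 1) * ξ) / Real.cosh ξ : ℝ) : ℂ) *
        (Complex.exp (Complex.I * x * ξ) * (Complex.I * ξ))) α Set.univ Filter.univ_mem
      (fun x => (continuous_const.mul (sinh_cont β)).mul (by fun_prop))
      ((continuous_const.mul (sinh_cont β)).mul (by fun_prop))
      (fun x ξ => (exp_deriv x ξ).const_mul _)
      (fun ξ => by
        rw [norm_mul, norm_mul, exp_norm, Complex.norm_real, mul_one, Complex.norm_I, one_mul]
        exact sinh_bd β ξ hβ)
      (fun x _ ξ => by
        rw [norm_mul, norm_mul, norm_mul, norm_mul, exp_norm, Complex.norm_real, Complex.norm_real,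
          Complex.norm_I, one_mul, one_mul, one_mul]
        exact mul_le_of_le_one_left (abs_nonneg _) (sinh_bd β ξ hβ))
    have B1 := param_deriv f
      (fun y ξ => ((Real.cosh ((y + 1) * ξ) / Real.cosh ξ : ℝ) : ℂ) * Complex.exp (Complex.I * α * ξ))
      (fun y ξ => ((ξ * (Real.sinh ((y + 1) * ξ) / Real.cosh ξ) : ℝ) : ℂ) *
        Complex.exp (Complex.I * α * ξ)) β _ hs
      (fun y => (cosh_cont y).mul (by fun_prop))
      (by
        simp only [Complex.ofReal_mul ]
        exact (Complex.continuous_ofReal.mul (sinh_cont β)).mul (by fun_prop))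
      (fun y ξ => (cosh_deriv y ξ).mul_const _)
      (fun ξ => by
        rw [norm_mul, exp_norm, Complex.norm_real, mul_one]; exact cosh_bd β ξ hβ)
      (fun y hy ξ => by
        rw [norm_mul, exp_norm, Complex.norm_real, mul_one, norm_mul]
        exact mul_le_of_le_one_right (abs_nonneg _) (sinh_bd y ξ hy))
    have B2 := param_deriv f
      (fun y ξ => Complex.I * ((Real.sinh ((y + 1) * ξ) / Real.cosh ξ : ℝ) : ℂ) *
        Complex.exp (Complex.I * α * ξ))
      (fun y ξ => Complex.I * ((ξ * (Real.cosh ((y + 1) * ξ) / Real.cosh ξ) : ℝ) : ℂ) *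
        Complex.exp (Complex.I * α * ξ)) β _ hs
      (fun y => (continuous_const.mul (sinh_cont y)).mul (by fun_prop))
      (by
        simp only [Complex.ofReal_mul ]
        exact (continuous_const.mul (Complex.continuous_ofReal.mul (cosh_cont β))).mul
          (by fun_prop))
      (fun y ξ => ((sinh_deriv y ξ).const_mul _).mul_const _)
      (fun ξ => by
        rw [norm_mul, norm_mul, exp_norm, Complex.norm_real, mul_one, Complex.norm_I, one_mul]
        exact sinh_bd β ξ hβ)
      (fun y hy ξ => by
        rw [norm_mul, norm_mul, exp_norm, Complex.norm_real, mul_one, norm_mul, Complex.norm_I,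
          one_mul]
        exact mul_le_of_le_one_right (abs_nonneg _) (cosh_bd y ξ hy))
    simp only [hu, hv, mul_right_comm _ (FT (⇑f) _) (Complex.exp _)]
    rw [A1.deriv, A2.deriv, B1.deriv, B2.deriv, ← smul_neg, ← integral_neg]
    constructor
    · congr 2
      funext ξ
      push_cast
      ring
    · congr 2
      funext ξ
      push_cast
      linear_combination ((ξ : ℂ) * (Complex.sinh ((β + 1) * ξ) / Complex.cosh ξ) *
        Complex.exp (Complex.I * α * ξ) * FT (⇑f) ξ) * Complex.I_sq
  · intro α
    rw [← FT_inv g α, hv, ← smul_neg, ← integral_neg]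
    congr 2
    funext ξ
    rw [hg, zero_add, one_mul, Real.tanh_eq_sinh_div_cosh]
    ring
end
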